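/- arXiv:2512.20869 — 6 statements merged into one kernel-verified Lean document; each statement's English description precedes it below -/
import Mathlib

section
/- Let x_0, x_1, ..., x_m (m ≥ 1) be pairwise distinct elements of a linear order. For each j with 1 ≤ j ≤ m let ρ(j) = |{i : 1 ≤ i ≤ m, x_i < x_j}|, and let r = |{i : 1 ≤ i ≤ m, x_i < x_0}|. Then for every j with 1 ≤ j ≤ m, one has x_0 < x_j if and only if ρ(j) ≥ r. -/
/-- For pairwise distinct elements `x 0, x 1, …, x m` of a linear order,
with `ρ j` the rank of `x j` among `x 1, …, x m` and `r` the rank of `x 0`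
among `x 0, x 1, …, x m`, we have `x 0 < x j` iff `ρ j ≥ r`. -/
theorem step5_comparison_criterion {α : Type*} [LinearOrder α] (m : ℕ) (hm : 1 ≤ m)
    (x : ℕ → α)
    (hdist : ∀ i ≤ m, ∀ j ≤ m, i ≠ j → x i ≠ x j)
    (ρ : ℕ → ℕ)
    (hρ : ∀ j, 1 ≤ j → j ≤ m →
      ρ j = ((Finset.Icc 1 m).filter (fun i => x i < x j)).card)
    (r : ℕ)
    (hr : r = ((Finset.Icc 1 m).filter (fun i => x i < x 0)).card) :
    ∀ j, 1 ≤ j → j ≤ m → (x 0 < x j ↔ r ≤ ρ j) := by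
  intro j h1 hj
  rw [hρ j h1 hj, hr]
  constructor
  · intro h
    apply Finset.card_le_card
    intro i hi
    rw [Finset.mem_filter] at hi ⊢
    exact ⟨hi.1, hi.2.trans h⟩
  · intro h
    by_contra hn
    have hlt : x j < x 0 :=
      lt_of_le_of_ne (not_lt.mp hn) (hdist j hj 0 (Nat.zero_le m) (by omega))
    refine absurd h (not_le.mpr (Finset.card_lt_card ?_))
    rw [Finset.ssubset_iff_of_subset]
    · refine ⟨j, ?_, ?_⟩
      · rw [Finset.mem_filter, Finset.mem_Icc]
        exact ⟨⟨h1, hj⟩, hlt⟩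
      · rw [Finset.mem_filter]
        exact fun hh => lt_irrefl _ hh.2
    · intro i hi
      rw [Finset.mem_filter] at hi ⊢
      exact ⟨hi.1, hi.2.trans hlt⟩
end

section
/- Let T = T[0]T[1]...T[n-1] be a string of length n ≥ 1 over a linearly ordered alphabet such that T[n-1] is strictly smaller than every other symbol occurring in T and occurs only at position n-1. For 0 ≤ i < n let T_i denote the suffix T[i..n-1], and let LA[i] denote the length of the longest prefix of T_i that is a Lyndon word. Then LA[i] = j - i, where j = min{ k : i < k < n and T_k <_lex T_i } if such k exists, and j = n otherwise. -/
/-- The suffix `T[i..n-1]` of the string of length `n` represented by `T : ℕ → α`. -/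
def suffixAt {α : Type*} (T : ℕ → α) (n i : ℕ) : List α :=
  (List.range (n - i)).map (fun k => T (i + k))

/-- A Lyndon word: a nonempty string strictly lexicographically smaller than
all of its proper nonempty suffixes. -/
def IsLyndon {α : Type*} [LinearOrder α] (w : List α) : Prop :=
  w ≠ [] ∧ ∀ i, 0 < i → i < w.length → List.Lex (· < ·) w (w.drop i)

/-- Length of the longest prefix of the suffix `T_i` that is a Lyndon word. -/
noncomputable def longestLyndonPrefixLen {α : Type*} [LinearOrder α] (T : ℕ → α) (n i : ℕ) : ℕ :=
  sSup {L | L ≤ n - i ∧ IsLyndon ((suffixAt T n i).take L)}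

theorem lexMapAux {α : Type*} [LinearOrder α] (f g : ℕ → α) (a b : ℕ) (hab : b ≤ a) :
    List.Lex (· < ·) ((List.range a).map f) ((List.range b).map g) ↔
      ∃ p, p < b ∧ (∀ q, q < p → f q = g q) ∧ f p < g p := by
  change ((List.range a).map f) < ((List.range b).map g) ↔ _
  rw [List.lt_iff_exists]
  constructor
  · rintro (⟨_, h⟩ | ⟨p, h1, h2, h3, h4⟩)
    · simp at h; omega
    · simp at h1 h2 h4
      refine ⟨p, h2, fun q hq => ?_, h4⟩
      simpa using h3 q hq
  · rintro ⟨p, hp, h1, h2⟩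
    refine Or.inr ⟨p, by simp; omega, by simpa using hp, fun q hq => ?_, by simpa using h2⟩
    simpa using h1 q hq

theorem suffixTake {α : Type*} (T : ℕ → α) (n i L : ℕ) (hL : L ≤ n - i) :
    (suffixAt T n i).take L = (List.range L).map (fun q => T (i + q)) := by
  apply List.ext_getElem
  · simp [suffixAt, hL]
  · intros; simp [suffixAt]

theorem mapDrop {α : Type*} (T : ℕ → α) (i L k : ℕ) :
    ((List.range L).map (fun q => T (i + q))).drop k
      = (List.range (L - k)).map (fun q => T (i + k + q)) := by
  apply List.ext_getElem
  · simp
  · intros; simp [Nat.add_assoc]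

theorem lyndonPrefixIff {α : Type*} [LinearOrder α] (T : ℕ → α) (n i L : ℕ) (hL : L ≤ n - i) :
    IsLyndon ((suffixAt T n i).take L) ↔ 0 < L ∧ ∀ k, 0 < k → k < L →
      ∃ p, p < L - k ∧ (∀ q, q < p → T (i + q) = T (i + k + q)) ∧ T (i + p) < T (i + k + p) := by
  rw [suffixTake T n i L hL]
  unfold IsLyndon
  apply and_congr
  · simp [Nat.pos_iff_ne_zero]
  · simp only [List.length_map, List.length_range, mapDrop]
    refine forall_congr' fun k => forall_congr' fun _ => forall_congr' fun _ => ?_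
    exact lexMapAux _ _ _ _ (by omega)

theorem suffixLtIff {α : Type*} [LinearOrder α] (T : ℕ → α) (n i k : ℕ) (h : i ≤ k) :
    suffixAt T n i < suffixAt T n k ↔
      ∃ p, p < n - k ∧ (∀ q, q < p → T (i + q) = T (k + q)) ∧ T (i + p) < T (k + p) :=
  lexMapAux _ _ _ _ (by omega)

/-- For a string `T` of length `n ≥ 1` whose last symbol is strictly
smaller than every other symbol (and occurs only at position `n-1`),
`LA[i] = j - i` where `j` is the smallest index `k > i` with `T_k <_lex T_i`,
and `j = n` if no such `k` exists. -/
theorem lyndonArray_eq_nsv {α : Type*} [LinearOrder α] (T : ℕ → α) (n : ℕ) (hn : 1 ≤ n)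
    (hend : ∀ k, k < n - 1 → T (n - 1) < T k)
    (i : ℕ) (hi : i < n) (j : ℕ)
    (hj : j = sInf {k | k = n ∨
      (i < k ∧ k < n ∧ List.Lex (· < ·) (suffixAt T n k) (suffixAt T n i))}) :
    longestLyndonPrefixLen T n i = j - i := by
  have hmem : j = n ∨ (i < j ∧ j < n ∧ suffixAt T n j < suffixAt T n i) := by
    have := Nat.sInf_mem (s := {k | k = n ∨
      (i < k ∧ k < n ∧ List.Lex (· < ·) (suffixAt T n k) (suffixAt T n i))}) ⟨n, Or.inl rfl⟩
    rw [← hj] at this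
    exact this
  have hjn : j ≤ n := by omega
  have hij : i < j := by omega
  have hmin : ∀ k, i < k → k < j → suffixAt T n i < suffixAt T n k := by
    intro k h1 h2
    rcases lt_trichotomy (suffixAt T n i) (suffixAt T n k) with h | h | h
    · exact h
    · have := congrArg List.length h
      simp [suffixAt] at this
      omega
    · exfalso
      rw [hj] at h2
      exact Nat.notMem_of_lt_sInf h2 (Or.inr ⟨h1, by omega, h⟩)
  have hg : IsGreatest {L | L ≤ n - i ∧ IsLyndon ((suffixAt T n i).take L)} (j - i) := by
    constructor
    · refine ⟨by omega, ?_⟩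
      rw [lyndonPrefixIff T n i _ (by omega)]
      refine ⟨by omega, fun k hk hkj => ?_⟩
      obtain ⟨p, hp, h1, h2⟩ := (suffixLtIff T n i (i + k) (by omega)).1
        (hmin (i + k) (by omega) (by omega))
      by_cases hpd : p < j - i - k
      · exact ⟨p, hpd, h1, h2⟩
      · exfalso
        rcases hmem with h | ⟨_, hlt, h⟩
        · omega
        · have h3 : suffixAt T n (j - k) < suffixAt T n j := by
            rw [suffixLtIff T n _ _ (by omega)]
            have e1 : ∀ q, j - k + q = i + (q + (j - i - k)) := by intro q; omega
            have e2 : ∀ q, j + q = i + k + (q + (j - i - k)) := by intro q; omega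
            refine ⟨p - (j - i - k), by omega, fun q hq => ?_, ?_⟩
            · rw [e1, e2]; exact h1 _ (by omega)
            · rw [e1, e2, Nat.sub_add_cancel (by omega)]; exact h2
          exact lt_asymm (h3.trans h) (hmin (j - k) (by omega) (by omega))
    · rintro L ⟨hL, hlyn⟩
      by_contra hlt
      rw [lyndonPrefixIff T n i _ hL] at hlyn
      obtain ⟨p, hp, h1, h2⟩ := hlyn.2 (j - i) (by omega) (by omega)
      rw [show i + (j - i) = j by omega] at h1 h2
      rcases hmem with h | ⟨_, _, h⟩
      · omega
      · exact lt_asymm h ((suffixLtIff T n i j (by omega)).2 ⟨p, by omega, h1, h2⟩)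
  exact hg.csSup_eq
end

section
/- Let T = T[0]T[1]...T[n-1] be a string of length n ≥ 1 over a linearly ordered alphabet such that T[n-1] is strictly smaller than every other symbol occurring in T and occurs only at position n-1. Fix 0 ≤ i < n and let j = min{ k : i < k < n and T_k <_lex T_i } if such k exists, and j = n otherwise. Then the substring T[i..j-1] is a Lyndon word. -/
theorem lex_append_or_prefix {α : Type*} [LinearOrder α] {v w : List α}
    (h : List.Lex (· < ·) v w) :
    (∀ x y, List.Lex (· < ·) (v ++ x) (w ++ y)) ∨ ∃ t, w = v ++ t := by
  induction h with
  | nil => right; exact ⟨_, rfl⟩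
  | rel h => left; intro x y; exact List.Lex.rel h
  | cons h ih =>
    rcases ih with ih | ⟨t, rfl⟩
    · left; intro x y; exact List.Lex.cons (ih x y)
    · right; exact ⟨t, rfl⟩

theorem lex_cancel {α : Type*} [LinearOrder α] (a : List α) {x y : List α}
    (h : List.Lex (· < ·) (a ++ x) (a ++ y)) : List.Lex (· < ·) x y := by
  induction a with
  | nil => exact h
  | cons c a ih =>
    cases h with
    | rel h => exact absurd h (lt_irrefl _)
    | cons h => exact ih h

theorem lex_tri {α : Type*} [LinearOrder α] (a b : List α) (hl : a.length ≠ b.length)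
    (h : ¬ List.Lex (· < ·) a b) : List.Lex (· < ·) b a := by
  rcases lt_trichotomy a b with h1 | h1 | h1
  · exact absurd h1 h
  · exact absurd (congrArg List.length h1) hl
  · exact h1

theorem lyndon_core {α : Type*} [LinearOrder α] (S : List α) (L : ℕ) (hL : 0 < L)
    (hLS : L ≤ S.length)
    (hmin : ∀ m, 0 < m → m < L → ¬ List.Lex (· < ·) (S.drop m) S)
    (hend : L = S.length ∨ List.Lex (· < ·) (S.drop L) S) : IsLyndon (S.take L) := by
  have hlen : (S.take L).length = L := by simp [hLS]
  refine ⟨fun h => by simp [h] at hlen; omega, fun m hm0 hm => ?_⟩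
  rw [hlen] at hm
  by_contra hcon
  have hlt := lex_tri _ _ (by rw [List.length_drop, hlen]; omega) hcon
  have hS : S.take L ++ S.drop L = S := List.take_append_drop L S
  have hSm : (S.take L).drop m ++ S.drop L = S.drop m := by
    conv_rhs => rw [← hS, List.drop_append_of_le_length (by omega)]
  rcases lex_append_or_prefix hlt with h | ⟨t, ht⟩
  · have := h (S.drop L) (S.drop L)
    rw [hS, hSm] at this
    exact hmin m hm0 hm this
  · have hb : ((S.take L).drop m).length = L - m := by rw [List.length_drop, hlen]
    have hS2 : S = (S.take L).drop m ++ (t ++ S.drop L) := by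
      rw [← List.append_assoc, ← ht, hS]
    have hd : S.drop (L - m) = t ++ S.drop L := by
      conv_lhs => rw [hS2]
      exact List.drop_left' hb
    have h1 := lex_tri (S.drop m) S (by rw [List.length_drop]; omega) (hmin m hm0 hm)
    have h2 : List.Lex (· < ·) (S.drop (L - m)) (S.drop L) := by
      apply lex_cancel ((S.take L).drop m)
      rw [hSm, hd, ← hS2]; exact h1
    rcases hend with he | he
    · rw [he, List.drop_length] at h2
      exact List.not_lex_nil h2
    · have h3 : S.drop (L - m) < S := lt_trans (b := S.drop L) h2 he
      exact hmin (L - m) (by omega) (by omega) h3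

theorem suffixAt_drop {α : Type*} (T : ℕ → α) (n i m : ℕ) :
    (suffixAt T n i).drop m = suffixAt T n (i + m) := by
  apply List.ext_getElem
  · simp [suffixAt]; omega
  · intro k h1 h2
    simp [suffixAt, Nat.add_assoc]

/-- With `j` the smallest index `k > i` such that `T_k <_lex T_i`
(or `j = n` if no such `k` exists), the factor `T[i..j-1]` is a Lyndon word. -/
theorem nsv_factor_isLyndon {α : Type*} [LinearOrder α] (T : ℕ → α) (n : ℕ) (hn : 1 ≤ n)
    (hend : ∀ k, k < n - 1 → T (n - 1) < T k)
    (i : ℕ) (hi : i < n) (j : ℕ)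
    (hj : j = sInf {k | k = n ∨
      (i < k ∧ k < n ∧ List.Lex (· < ·) (suffixAt T n k) (suffixAt T n i))}) :
    IsLyndon ((suffixAt T n i).take (j - i)) := by
  have hmem := Nat.sInf_mem (s := {k | k = n ∨
      (i < k ∧ k < n ∧ List.Lex (· < ·) (suffixAt T n k) (suffixAt T n i))}) ⟨n, Or.inl rfl⟩
  have hmin : ∀ k, k < j → ¬ (k = n ∨
      (i < k ∧ k < n ∧ List.Lex (· < ·) (suffixAt T n k) (suffixAt T n i))) := by
    intro k hk hk2
    rw [hj] at hk
    exact Nat.notMem_of_lt_sInf hk hk2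
  rw [← hj] at hmem
  have hlen : (suffixAt T n i).length = n - i := by simp [suffixAt]
  have hij : i < j ∧ j ≤ n := by
    rcases hmem with h | h <;> omega
  apply lyndon_core
  · omega
  · omega
  · intro m h0 hm h
    rw [suffixAt_drop] at h
    exact hmin (i + m) (by omega) (Or.inr ⟨by omega, by omega, h⟩)
  · rcases hmem with h | h
    · left; omega
    · right
      rw [suffixAt_drop, show i + (j - i) = j by omega]
      exact h.2.2
end

section
/- Let T = T[0]T[1]...T[n-1] be a string of length n ≥ 1 over a linearly ordered alphabet such that T[n-1] is strictly smaller than every other symbol occurring in T and occurs only at position n-1. Fix 0 ≤ i < n and let j = min{ k : i < k < n and T_k <_lex T_i } if such k exists, and j = n otherwise. Then for every length ℓ with j - i < ℓ ≤ n - i, the substring T[i..i+ℓ-1] is not a Lyndon word. -/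
theorem lex_append_aux {α : Type*} [LinearOrder α] {a b : List α}
    (h : List.Lex (· < ·) a b) (x y : List α) (hl : b.length ≤ a.length) :
    List.Lex (· < ·) (a ++ x) (b ++ y) := by
  induction h with
  | nil => simp at hl
  | cons _ ih => exact List.Lex.cons (ih (by simpa using hl))
  | rel h => exact List.Lex.rel h

theorem suffixAt_drop_aux {α : Type*} (T : ℕ → α) (n i d : ℕ) :
    (suffixAt T n i).drop d = suffixAt T n (i + d) := by
  apply List.ext_getElem
  · simp [suffixAt]; omega
  · intro k h1 h2
    simp [suffixAt, Nat.add_assoc]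

/-- With `j` the smallest index `k > i` such that `T_k <_lex T_i`
(or `j = n` if no such `k` exists), no prefix of `T_i` of length `ℓ` with
`j - i < ℓ ≤ n - i` is a Lyndon word. -/
theorem longer_prefixes_not_lyndon {α : Type*} [LinearOrder α] (T : ℕ → α) (n : ℕ)
    (hn : 1 ≤ n)
    (hend : ∀ k, k < n - 1 → T (n - 1) < T k)
    (i : ℕ) (hi : i < n) (j : ℕ)
    (hj : j = sInf {k | k = n ∨
      (i < k ∧ k < n ∧ List.Lex (· < ·) (suffixAt T n k) (suffixAt T n i))}) :
    ∀ ℓ, j - i < ℓ → ℓ ≤ n - i → ¬ IsLyndon ((suffixAt T n i).take ℓ) := by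
  intro ℓ h1 h2 hL
  have hmem : j ∈ {k | k = n ∨
      (i < k ∧ k < n ∧ List.Lex (· < ·) (suffixAt T n k) (suffixAt T n i))} := by
    rw [hj]
    exact Nat.sInf_mem ⟨n, Or.inl rfl⟩
  rcases hmem with h | ⟨hij, hjn, hlex⟩
  · omega
  have hlen : (suffixAt T n i).length = n - i := by simp [suffixAt]
  have h3 := hL.2 (j - i) (by omega) (by rw [List.length_take, hlen]; omega)
  have h4 := lex_append_aux h3 ((suffixAt T n i).drop ℓ) ((suffixAt T n i).drop ℓ) (by simp)
  rw [← List.drop_append_of_le_length (by rw [List.length_take, hlen]; omega),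
    List.take_append_drop, suffixAt_drop_aux, show i + (j - i) = j by omega] at h4
  exact lt_asymm (a := suffixAt T n i) (b := suffixAt T n j) h4 hlex
end

section
/- Let T = T[0]T[1]...T[n-1] be a string of length n ≥ 2 over a linearly ordered alphabet such that T[n-1] is strictly smaller than every other symbol occurring in T and occurs only at position n-1. Fix s with 0 ≤ s < n-1 and let c = T[s]. Then |{ j : s < j < n, T_j <_lex T_s }| = |{ j : s < j < n, T[j] < c }| + |{ j : s < j < n-1, T[j] = c and T_{j+1} <_lex T_{s+1} }|. -/
/-- A nonempty suffix is its first symbol followed by the next suffix. -/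
theorem suffixAt_cons {α : Type*} (T : ℕ → α) (n i : ℕ) (h : i < n) :
    suffixAt T n i = T i :: suffixAt T n (i + 1) := by
  unfold suffixAt
  have e : n - i = (n - (i + 1)) + 1 := by omega
  rw [e, List.range_succ_eq_map, List.map_cons, List.map_map]
  simp only [Nat.add_zero, List.cons.injEq, true_and]
  apply List.map_congr_left
  intro k _
  simp only [Function.comp]
  congr 1
  omega

/-- (Correctness of Step 2.) The rank of the suffix `T_s` among the
suffixes `T_{s+1}, …, T_{n-1}` equals the number of positions `j > s` holding a symbol
strictly smaller than `c = T[s]`, plus the number of positions `j > s` holding `c`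
and followed by a suffix smaller than `T_{s+1}`. -/
theorem step2_rank_counting {α : Type*} [LinearOrder α]
    (T : ℕ → α) (n : ℕ) (hn : 2 ≤ n)
    (hend : ∀ k, k < n - 1 → T (n - 1) < T k)
    (s : ℕ) (hs : s < n - 1) (c : α) (hc : c = T s) :
    Set.ncard {j : ℕ | s < j ∧ j < n ∧
        List.Lex (· < ·) (suffixAt T n j) (suffixAt T n s)} =
      Set.ncard {j : ℕ | s < j ∧ j < n ∧ T j < c} +
      Set.ncard {j : ℕ | s < j ∧ j < n - 1 ∧ T j = c ∧
        List.Lex (· < ·) (suffixAt T n (j + 1)) (suffixAt T n (s + 1))} := by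
  subst hc
  rw [← Set.ncard_union_eq ?_ ((Set.finite_lt_nat n).subset fun j hj => hj.2.1)
    ((Set.finite_lt_nat (n - 1)).subset fun j hj => hj.2.1)]
  · congr 1
    ext j
    simp only [Set.mem_ofPred_eq, Set.mem_union]
    constructor
    · rintro ⟨h1, h2, h3⟩
      rw [suffixAt_cons T n j h2, suffixAt_cons T n s (by omega)] at h3
      have h5 : T j < T s ∨ (T j = T s ∧
          List.Lex (· < ·) (suffixAt T n (j + 1)) (suffixAt T n (s + 1))) := by
        generalize T j = a at h3 ⊢
        generalize T s = b at h3 ⊢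
        cases h3 with
        | rel h => exact Or.inl h
        | cons h => exact Or.inr ⟨rfl, h⟩
      rcases h5 with h3 | ⟨h3, h4⟩
      · exact Or.inl ⟨h1, h2, h3⟩
      · refine Or.inr ⟨h1, ?_, h3, h4⟩
        by_contra hj
        have : j = n - 1 := by omega
        subst this
        exact absurd h3 (hend s hs).ne
    · rintro (⟨h1, h2, h3⟩ | ⟨h1, h2, h3, h4⟩)
      · refine ⟨h1, h2, ?_⟩
        rw [suffixAt_cons T n j h2, suffixAt_cons T n s (by omega)]
        exact List.Lex.rel h3
      · refine ⟨h1, by omega, ?_⟩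
        rw [suffixAt_cons T n j (by omega), suffixAt_cons T n s (by omega), h3]
        exact List.Lex.cons h4
  · rw [Set.disjoint_left]
    rintro j ⟨_, _, h⟩ ⟨_, _, h', _⟩
    exact h.ne h'
end

section
/- Let T = T[0]T[1]...T[n-1] be a string of length n ≥ 2 over a linearly ordered alphabet such that the end marker $ = T[n-1] is strictly smaller than every other symbol occurring in T and occurs only at position n-1. Fix s with 0 ≤ s < n-1, let U = T_{s+1} be the suffix of length m = n-s-1, let BWT(U) be the Burrows–Wheeler Transform of U, and let p be the unique index with BWT(U)[p] = $. Then for every symbol c ≠ $, the number of occurrences of c among BWT(U)[0], ..., BWT(U)[p] equals |{ j : s+1 ≤ j < n-1, T[j] = c and T_{j+1} <_lex T_{s+1} }|. -/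
/-- Let `U = T_{s+1}` (of length `m = n-s-1`) and let `p` be the unique
position of the end marker `$ = T[n-1]` in `BWT(U)`. For every symbol `c ≠ $`, the
number of occurrences of `c` in `BWT(U)[0..p]` equals the number of positions
`s+1 ≤ j < n-1` with `T[j] = c` whose following suffix satisfies `T_{j+1} <_lex T_{s+1}`. -/
theorem step2_occurrence_counting {α : Type*} [LinearOrder α]
    (T : ℕ → α) (n : ℕ) (hn : 2 ≤ n)
    (hend : ∀ k, k < n - 1 → T (n - 1) < T k)
    (s : ℕ) (hs : s < n - 1)
    (saU : Equiv.Perm (Fin (n - s - 1)))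
    (hsaU : ∀ a b : Fin (n - s - 1), a < b →
      List.Lex (· < ·) (suffixAt T n (s + 1 + (saU a : ℕ)))
                       (suffixAt T n (s + 1 + (saU b : ℕ))))
    (bwtU : Fin (n - s - 1) → α)
    (hbwtU : ∀ i : Fin (n - s - 1),
      bwtU i = if (saU i : ℕ) = 0 then T (n - 1) else T (s + 1 + ((saU i : ℕ) - 1)))
    (p : Fin (n - s - 1)) (hp : bwtU p = T (n - 1)) :
    ∀ c : α, c ≠ T (n - 1) →
      Set.ncard {i : Fin (n - s - 1) | (i : ℕ) ≤ (p : ℕ) ∧ bwtU i = c} =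
      Set.ncard {j : ℕ | s + 1 ≤ j ∧ j < n - 1 ∧ T j = c ∧
        List.Lex (· < ·) (suffixAt T n (j + 1)) (suffixAt T n (s + 1))} := by
  intro c hc
  have hp0 : (saU p : ℕ) = 0 := by
    by_contra h
    have h1 := hbwtU p
    rw [if_neg h, hp] at h1
    have h2 := (saU p).isLt
    have h3 := hend (s + 1 + ((saU p : ℕ) - 1)) (by omega)
    exact absurd h1 (ne_of_lt h3)
  have hne : ∀ i, bwtU i = c → (saU i : ℕ) ≠ 0 := by
    intro i hi h
    have h1 := hbwtU i
    rw [if_pos h, hi] at h1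
    exact hc h1
  have hasymm : ∀ x y : List α, List.Lex (· < ·) x y → List.Lex (· < ·) y x → False := by
    intro x y h1 h2
    exact lt_asymm (show x < y from h1) (show y < x from h2)
  refine Set.ncard_congr (fun i _ => s + (saU i : ℕ)) ?_ ?_ ?_
  · rintro i ⟨hip, hi⟩
    have h0 := hne i hi
    have hlt := (saU i).isLt
    have h1 := hbwtU i
    rw [if_neg h0, hi] at h1
    have hlp : i < p := by
      refine lt_of_le_of_ne hip ?_
      rintro rfl
      exact h0 hp0
    have h2 := hsaU i p hlp
    rw [hp0] at h2
    refine ⟨by omega, by omega, ?_, ?_⟩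
    · rw [h1]; congr 1; omega
    · have e : s + (saU i : ℕ) + 1 = s + 1 + (saU i : ℕ) := by omega
      rw [e]
      exact h2
  · intro a b _ _ hab
    apply saU.injective
    apply Fin.ext
    simpa using hab
  · rintro j ⟨hj1, hj2, hj3, hj4⟩
    have hv : (saU (saU.symm ⟨j - s, by omega⟩) : ℕ) = j - s := by simp
    generalize saU.symm ⟨j - s, by omega⟩ = i at hv
    refine ⟨i, ⟨?_, ?_⟩, by simp only [hv]; omega⟩
    · by_contra hlt
      have h2 := hsaU p i (not_le.mp hlt)
      have e : s + 1 + (j - s) = j + 1 := by omega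
      rw [hp0, hv, e] at h2
      exact hasymm _ _ hj4 h2
    · rw [hbwtU, if_neg (by omega), hv, ← hj3]
      congr 1; omega
end
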